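/- If a and b are positive integers with a² = 2b², then 0 < 2b − a < a and 0 < a − b < b. -/

import Mathlib

theorem tennenbaum_sqrt2_descent (a b : ℤ) (ha : 0 < a) (hb : 0 < b)
    (h : a ^ 2 = 2 * b ^ 2) :
    (0 < 2 * b - a ∧ 2 * b - a < a) ∧ (0 < a - b ∧ a - b < b) := by
  -- All four inequalities follow from `b < a < 2b`, i.e. from `b² < 2b² < (2b)²`.
  have hb2 : 0 < b ^ 2 := by positivity
  have hba : b < a := lt_of_pow_lt_pow_left₀ 2 ha.le (by linarith)
  have hab : a < 2 * b := lt_of_pow_lt_pow_left₀ 2 (by linarith) (by linarith [mul_pow 2 b 2])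
  refine ⟨⟨?_, ?_⟩, ?_, ?_⟩ <;> linarith
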